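/- Let T be a rooted tree on a vertex set X. Then every subgroup of the semigroup of path-bijections 𝒮(T) is trivial; that is, every subsemigroup of 𝒮(T) which forms a group under the induced composition consists of exactly one element (an idempotent of 𝒮(T)). -/

import Mathlib

open Set Cardinal

universe u

/-- A chart on `X` (an element of the symmetric inverse monoid `I_X`): a partial
bijection between subsets of `X`, encoded as a functional, injective relation,
i.e. a set of pairs. -/
structure Chart (X : Type u) : Type u where
  rel : Set (X × X)
  functional : ∀ ⦃x y y'⦄, (x, y) ∈ rel → (x, y') ∈ rel → y = y'
  injective : ∀ ⦃x x' y⦄, (x, y) ∈ rel → (x', y) ∈ rel → x = x'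

namespace Chart

variable {X : Type u}

/-- Composition of charts: compose wherever possible. -/
instance : Mul (Chart X) :=
  ⟨fun f g =>
    { rel := {p | ∃ y, (p.1, y) ∈ f.rel ∧ (y, p.2) ∈ g.rel}
      functional := by
        rintro x y y' ⟨z, hz1, hz2⟩ ⟨w, hw1, hw2⟩
        obtain rfl : z = w := f.functional hz1 hw1
        exact g.functional hz2 hw2
      injective := by
        rintro x x' y ⟨z, hz1, hz2⟩ ⟨w, hw1, hw2⟩
        obtain rfl : z = w := g.injective hz2 hw2
        exact f.injective hz1 hw1 }⟩

/-- The inverse chart. -/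
instance : Inv (Chart X) :=
  ⟨fun f =>
    { rel := {p | (p.2, p.1) ∈ f.rel}
      functional := fun _ _ _ h h' => f.injective h h'
      injective := fun _ _ _ h h' => f.functional h h' }⟩

/-- The domain of a chart. -/
def dom (f : Chart X) : Set X := {x | ∃ y, (x, y) ∈ f.rel}

/-- The range (image) of a chart. -/
def ran (f : Chart X) : Set X := {y | ∃ x, (x, y) ∈ f.rel}

end Chart

/-- Membership in the subsemigroup of `I_X` generated by a set of charts. -/
inductive InGen {X : Type u} (S : Set (Chart X)) : Chart X → Prop
  | base {f : Chart X} : f ∈ S → InGen S f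
  | mul {f g : Chart X} : InGen S f → InGen S g → InGen S (f * g)

/-- The subsemigroup of `I_X` generated by a set of charts. -/
def Sgen {X : Type u} (S : Set (Chart X)) : Set (Chart X) := {f | InGen S f}

/-- The Bergman–Shelah preorder `S ≼ T` on subsets of `I_X`: there is a countable
subset `U ⊆ I_X` with `S` contained in the subsemigroup generated by `T ∪ U`. -/
def BSleq {X : Type u} (S T : Set (Chart X)) : Prop :=
  ∃ U : Set (Chart X), U.Countable ∧ S ⊆ Sgen (T ∪ U)

/-- Bergman–Shelah equivalence `S ≈ T`. -/
def BSequiv {X : Type u} (S T : Set (Chart X)) : Prop := BSleq S T ∧ BSleq T S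

/-- The Bergman–Shelah preorder relative to a cardinal `κ`: `S ≼_κ T` iff there is
`U ⊆ I_X` with `|U| < κ` and `S` contained in the subsemigroup generated by `T ∪ U`. -/
def BSleqC {X : Type u} (κ : Cardinal.{u}) (S T : Set (Chart X)) : Prop :=
  ∃ U : Set (Chart X), #↥U < κ ∧ S ⊆ Sgen (T ∪ U)

/-- Bergman–Shelah equivalence relative to a cardinal `κ`. -/
def BSequivC {X : Type u} (κ : Cardinal.{u}) (S T : Set (Chart X)) : Prop :=
  BSleqC κ S T ∧ BSleqC κ T S

/-- A chart is a permutation of `X` if it is everywhere defined and surjective. -/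
def IsPermChart {X : Type u} (f : Chart X) : Prop :=
  (∀ x : X, ∃ y, (x, y) ∈ f.rel) ∧ ∀ y : X, ∃ x, (x, y) ∈ f.rel

/-- The partwise stabiliser of a family of subsets of `X`: all permutations of `X`
mapping each member of the family onto itself. -/
def PStab {X : Type u} (P : Set (Set X)) : Set (Chart X) :=
  {f | IsPermChart f ∧ ∀ B ∈ P, {y | ∃ x ∈ B, (x, y) ∈ f.rel} = B}

/-- A subset of `I_X` closed under composition. -/
def IsSubsemigroup {X : Type u} (S : Set (Chart X)) : Prop :=
  ∀ f ∈ S, ∀ g ∈ S, f * g ∈ S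

/-- A subsemigroup of `I_X` closed under inversion. -/
def IsInverseSubsemigroup {X : Type u} (S : Set (Chart X)) : Prop :=
  IsSubsemigroup S ∧ ∀ f ∈ S, f⁻¹ ∈ S

/-- The orbit of a point under a set of charts: `{x} ∪ {xf : f ∈ M, x ∈ dom f}`. -/
def ChartOrbit {X : Type u} (M : Set (Chart X)) (x : X) : Set X :=
  insert x {y | ∃ f ∈ M, (x, y) ∈ f.rel}

/-- The cone of a point under a set of charts: `{xs : s ∈ S, x ∈ dom s}`. -/
def ChartCone {X : Type u} (S : Set (Chart X)) (x : X) : Set X :=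
  {y | ∃ f ∈ S, (x, y) ∈ f.rel}

/-- The semilattice of idempotents of `I_X`: the partial identity charts. -/
def EX (X : Type u) : Set (Chart X) := {f | ∀ x y : X, (x, y) ∈ f.rel → y = x}

/-- A `κ`-uniform partition: every part has cardinality `κ`. -/
def IsUniformPartition {X : Type u} (κ : Cardinal.{u}) (P : Set (Set X)) : Prop :=
  Setoid.IsPartition P ∧ ∀ B ∈ P, #↥B = κ

/-- A `κ`-unbounded partition: all parts have cardinality `< κ` but no cardinal
`c < κ` bounds the cardinalities of all parts. -/
def IsUnboundedPartition {X : Type u} (κ : Cardinal.{u}) (P : Set (Set X)) : Prop :=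
  Setoid.IsPartition P ∧ (∀ B ∈ P, #↥B < κ) ∧ ¬∃ c < κ, ∀ B ∈ P, #↥B ≤ c

/-- A `κ`-bounded partition: some cardinal `c < κ` bounds the cardinalities of
all parts. -/
def IsBoundedPartition {X : Type u} (κ : Cardinal.{u}) (P : Set (Set X)) : Prop :=
  Setoid.IsPartition P ∧ ∃ c < κ, ∀ B ∈ P, #↥B ≤ c

/-- A rooted tree on (a subset of) `X`, encoded via its parent function: every
vertex reaches the root by finitely many applications of `par`. -/
structure RTree (X : Type u) : Type u where
  verts : Set X
  root : X
  root_mem : root ∈ verts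
  par : X → X
  par_mem : ∀ x ∈ verts, par x ∈ verts
  par_root : par root = root
  par_reaches : ∀ x ∈ verts, ∃ n : ℕ, par^[n] x = root

namespace RTree

variable {X : Type u}

/-- `T.anc x y` : `x` is an ancestor of `y` (or `x = y`), i.e. `x` lies on the
rooted path to `y`. -/
def anc (T : RTree X) (x y : X) : Prop := ∃ n : ℕ, T.par^[n] y = x

/-- The level of a vertex: its distance to the root. -/
noncomputable def level (T : RTree X) (x : X) : ℕ := sInf {n : ℕ | T.par^[n] x = T.root}

/-- The children of a vertex. -/
def children (T : RTree X) (x : X) : Set X :=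
  {y | y ∈ T.verts ∧ T.par y = x ∧ y ≠ x}

/-- The neighbours of a vertex in the tree (its children together with its
parent, if the vertex is not the root); the degree of the vertex is the size
of this set. -/
def nbhd (T : RTree X) (x : X) : Set X :=
  {y | y ∈ T.verts ∧ ((T.par y = x ∧ y ≠ x) ∨ (T.par x = y ∧ x ≠ y))}

/-- `P` is the vertex set of a (finite or infinite) path of `T` starting at the
root: a nonempty set of vertices closed under taking parents and linearly
ordered by ancestry. -/
def IsRootedPath (T : RTree X) (P : Set X) : Prop :=
  P.Nonempty ∧ P ⊆ T.verts ∧ (∀ x ∈ P, T.par x ∈ P) ∧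
    ∀ x ∈ P, ∀ y ∈ P, T.anc x y ∨ T.anc y x

end RTree

/-- `T'` is a subtree of `T`: a rooted tree on a subset of the vertices of `T`,
with the same root and the same parent relation. -/
def IsSubtree {X : Type u} (T' T : RTree X) : Prop :=
  T'.verts ⊆ T.verts ∧ T'.root = T.root ∧ ∀ x ∈ T'.verts, T'.par x = T.par x

/-- `Q` is a quasi-subtree of `T`: a rooted tree on a subset of the vertices of
`T` preserving the ancestry relation and the levels of `T`. -/
def IsQuasiSubtree {X : Type u} (Q T : RTree X) : Prop :=
  Q.verts ⊆ T.verts ∧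
    (∀ x ∈ Q.verts, ∀ y ∈ Q.verts, (Q.anc x y ↔ T.anc x y)) ∧
    ∀ x ∈ Q.verts, ∀ y ∈ Q.verts, (Q.level x = Q.level y ↔ T.level x = T.level y)

/-- Isomorphism of rooted trees: a bijection of the vertex sets mapping root to
root and commuting with the parent functions. -/
def RTreeIso {X : Type u} {Y : Type u} (T : RTree X) (R : RTree Y) : Prop :=
  ∃ φ : X → Y, Set.BijOn φ T.verts R.verts ∧ φ T.root = R.root ∧
    ∀ x ∈ T.verts, φ (T.par x) = R.par (φ x)

/-- The semigroup `𝒮(T)` of path-bijections of a rooted tree `T`: charts whose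
domain and range are vertex sets of rooted paths and which preserve levels. -/
def pathSg {X : Type u} (T : RTree X) : Set (Chart X) :=
  {f | (∃ P, T.IsRootedPath P ∧ Chart.dom f = P) ∧
    (∃ Q, T.IsRootedPath Q ∧ Chart.ran f = Q) ∧
    ∀ x y : X, (x, y) ∈ f.rel → T.level y = T.level x}

theorem RTree.level_spec {X : Type u} (T : RTree X) (hT : T.verts = Set.univ) (x : X) :
    T.par^[T.level x] x = T.root := by
  have h : ({n : ℕ | T.par^[n] x = T.root}).Nonempty :=
    T.par_reaches x (by rw [hT]; trivial)
  exact Nat.sInf_mem h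

theorem RTree.eq_of_anc {X : Type u} (T : RTree X) (hT : T.verts = Set.univ) {x y : X}
    (h : T.anc y x) (hl : T.level y = T.level x) : y = x := by
  obtain ⟨n, hn⟩ := h
  have hx := T.level_spec hT x
  have hy := T.level_spec hT y
  rcases Nat.eq_zero_or_pos (T.level x) with h0 | h0
  · rw [hl] at hy
    rw [h0] at hx hy
    exact hy.trans hx.symm
  · rcases Nat.eq_zero_or_pos n with hn0 | hn0
    · subst hn0
      exact hn.symm
    · exfalso
      have key : T.par^[T.level x - n] y = T.root := by
        rw [← hn, ← Function.iterate_add_apply]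
        rcases le_total n (T.level x) with hle | hle
        · rw [Nat.sub_add_cancel hle]
          exact hx
        · have : T.level x - n + n = (n - T.level x) + T.level x := by omega
          rw [this, Function.iterate_add_apply, hx]
          exact Function.iterate_fixed T.par_root _
      have : T.level y ≤ T.level x - n := Nat.sInf_le key
      omega

theorem Chart.eq_of_rel {X : Type u} {f g : Chart X} (h : f.rel = g.rel) : f = g := by
  cases f
  cases g
  cases h
  rfl

theorem Chart.mem_mul {X : Type u} {f g : Chart X} {x y : X} :
    (x, y) ∈ (f * g).rel ↔ ∃ z, (x, z) ∈ f.rel ∧ (z, y) ∈ g.rel := Iff.rfl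

/-- every subgroup of the path-bijection semigroup `𝒮(T)` of a
rooted tree `T` on a vertex set `X` is trivial: any subset of `𝒮(T)` which is
closed under composition and forms a group (with identity `e`) is the singleton
`{e}`, where `e` is an idempotent. -/
theorem stmt10 {X : Type u} (T : RTree X) (hT : T.verts = Set.univ)
    (H : Set (Chart X)) (hH : H ⊆ pathSg T)
    (hmul : ∀ f ∈ H, ∀ g ∈ H, f * g ∈ H)
    (e : Chart X) (he : e ∈ H)
    (hid : ∀ f ∈ H, e * f = f ∧ f * e = f)
    (hinv : ∀ f ∈ H, ∃ g ∈ H, f * g = e ∧ g * f = e) :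
    H = {e} ∧ e * e = e := by
  have hee : e * e = e := (hid e he).1
  have hd : ∀ x y, (x, y) ∈ e.rel → x = y := by
    intro x y h
    have h2 := h
    rw [← hee] at h2
    obtain ⟨z, h3, h4⟩ := Chart.mem_mul.1 h2
    obtain rfl := e.functional h h3
    exact e.injective h h4
  refine ⟨?_, hee⟩
  ext f
  simp only [Set.mem_singleton_iff]
  refine ⟨fun hf => ?_, fun h => h ▸ he⟩
  have hfd : ∀ x y, (x, y) ∈ f.rel → x = y ∧ (x, y) ∈ e.rel := by
    intro x y h
    have h1 := h
    have h2 := h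
    rw [← (hid f hf).1] at h1
    rw [← (hid f hf).2] at h2
    obtain ⟨z, hz, -⟩ := Chart.mem_mul.1 h1
    obtain ⟨w, -, hw⟩ := Chart.mem_mul.1 h2
    obtain rfl := hd _ _ hz
    obtain rfl := hd _ _ hw
    obtain ⟨⟨P, hP, hdom⟩, -, -⟩ := hH he
    subst hdom
    have hl := (hH hf).2.2 _ _ h
    have hxy : x = w := by
      rcases hP.2.2.2 x ⟨_, hz⟩ w ⟨_, hw⟩ with ha | ha
      · exact T.eq_of_anc hT ha hl.symm
      · exact (T.eq_of_anc hT ha hl).symm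
    subst hxy
    exact ⟨rfl, hz⟩
  apply Chart.eq_of_rel
  ext ⟨x, y⟩
  refine ⟨fun h => (hfd x y h).2, fun h => ?_⟩
  obtain rfl := hd _ _ h
  obtain ⟨g, -, hg, -⟩ := hinv f hf
  rw [← hg] at h
  obtain ⟨z, hz, -⟩ := Chart.mem_mul.1 h
  obtain rfl := (hfd _ _ hz).1
  exact hz
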